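/- Let G = (A, B, E) be a connected bipartite graph having exactly k twin classes contained in A. Then every A-partitioning cover of G has cost at least √k − 1. -/

import Mathlib

/- Common framework: bipartite graphs on vertex set `ℕ` with side labels,
   edge editions, vertex splittings, and the bicluster-editing numbers. -/

namespace BCE

/-- A graph on a finite subset of `ℕ` equipped with a labelling of its
vertices into two sides `A` and `B`. -/
structure BGraph where
  A : Set ℕ
  B : Set ℕ
  finA : A.Finite
  finB : B.Finite
  Adj : ℕ → ℕ → Prop
  symm : ∀ u v, Adj u v → Adj v u

/-- The vertex set of a graph. -/
def verts (G : BGraph) : Set ℕ := G.A ∪ G.B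

/-- The open neighbourhood of a vertex. -/
def nbhd (G : BGraph) (v : ℕ) : Set ℕ := {u | G.Adj v u}

/-- `G = (A, B, E)` is bipartite: the sides are disjoint and every edge joins
a vertex of `A` with a vertex of `B`. -/
def Bipartite (G : BGraph) : Prop :=
  Disjoint G.A G.B ∧
    ∀ u v, G.Adj u v → (u ∈ G.A ∧ v ∈ G.B) ∨ (u ∈ G.B ∧ v ∈ G.A)

/-- A (bipartite) graph is a disjoint union of bicliques iff whenever
`a-b-c-d` is a walk, `a` and `d` are adjacent (equivalently, every connected
component is a complete bipartite graph). -/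
def IsBicliqueUnion (G : BGraph) : Prop :=
  ∀ a b c d, G.Adj a b → G.Adj b c → G.Adj c d → G.Adj a d

/-- The editing operations: deletion of an edge, addition of an edge, and
splitting of a vertex `v` into `v` and a fresh vertex `v'` whose
neighbourhoods `N1`, `N2` cover the neighbourhood of `v`. -/
inductive Op where
  | del : ℕ → ℕ → Op
  | add : ℕ → ℕ → Op
  | split : ℕ → ℕ → Set ℕ → Set ℕ → Op

/-- `op` is a vertex splitting. -/
def IsSplitOp : Op → Prop
  | Op.split _ _ _ _ => True
  | _ => False

/-- `OpStep sA sB op G G'` : performing the single operation `op` on `G`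
yields `G'`; vertex splittings are allowed on side `A` (resp. `B`) only if
`sA` (resp. `sB`) is `true`.  A copy created by a splitting is put on the
same side as the split vertex. -/
inductive OpStep (sA sB : Bool) : Op → BGraph → BGraph → Prop where
  | del {G G' : BGraph} {u v : ℕ}
      (h : G.Adj u v) (hA : G'.A = G.A) (hB : G'.B = G.B)
      (hadj : ∀ x y, G'.Adj x y ↔
        (G.Adj x y ∧ ¬((x = u ∧ y = v) ∨ (x = v ∧ y = u)))) :
      OpStep sA sB (Op.del u v) G G'
  | add {G G' : BGraph} {u v : ℕ}
      (hu : u ∈ G.A) (hv : v ∈ G.B) (h : ¬ G.Adj u v)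
      (hA : G'.A = G.A) (hB : G'.B = G.B)
      (hadj : ∀ x y, G'.Adj x y ↔
        (G.Adj x y ∨ (x = u ∧ y = v) ∨ (x = v ∧ y = u))) :
      OpStep sA sB (Op.add u v) G G'
  | split {G G' : BGraph} {v v' : ℕ} {N1 N2 : Set ℕ}
      (hside : (v ∈ G.A ∧ sA = true) ∨ (v ∈ G.B ∧ sB = true))
      (hfresh : v' ∉ verts G)
      (hcover : N1 ∪ N2 = nbhd G v)
      (hA : v ∈ G.A → G'.A = insert v' G.A ∧ G'.B = G.B)
      (hB : v ∈ G.B → G'.A = G.A ∧ G'.B = insert v' G.B)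
      (hadj : ∀ x y, G'.Adj x y ↔
        ((G.Adj x y ∧ x ≠ v ∧ y ≠ v) ∨ (x = v ∧ y ∈ N1) ∨ (y = v ∧ x ∈ N1) ∨
          (x = v' ∧ y ∈ N2) ∨ (y = v' ∧ x ∈ N2))) :
      OpStep sA sB (Op.split v v' N1 N2) G G'

/-- `ApplySeq sA sB L G G'` : applying the sequence of operations `L`
to `G` yields `G'`. -/
def ApplySeq (sA sB : Bool) : List Op → BGraph → BGraph → Prop
  | [], G, G' => G' = G
  | op :: L, G, G'' => ∃ G', OpStep sA sB op G G' ∧ ApplySeq sA sB L G' G''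

/-- The sequence `L` transforms `G` into a disjoint union of bicliques. -/
def Solves (sA sB : Bool) (L : List Op) (G : BGraph) : Prop :=
  ∃ G', ApplySeq sA sB L G G' ∧ IsBicliqueUnion G'

/-- `bcevs G` : the minimum length of a sequence of edge editions and vertex
splittings transforming `G` into a disjoint union of bicliques. -/
noncomputable def bcevs (G : BGraph) : ℕ :=
  sInf {n | ∃ L, L.length = n ∧ Solves true true L G}

/-- `bceovs G` (that is, `bceovs(G, A)`) : the minimum length of such a
sequence in which vertex splittings are applied only to vertices of the side
`A` (and their copies, which are also on side `A`). -/
noncomputable def bceovs (G : BGraph) : ℕ :=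
  sInf {n | ∃ L, L.length = n ∧ Solves true false L G}

/-- The subgraph of `G` induced by `S`. -/
def induce (G : BGraph) (S : Set ℕ) : BGraph where
  A := G.A ∩ S
  B := G.B ∩ S
  finA := G.finA.subset Set.inter_subset_left
  finB := G.finB.subset Set.inter_subset_left
  Adj := fun u v => G.Adj u v ∧ u ∈ S ∧ v ∈ S
  symm := fun u v h => ⟨G.symm u v h.1, h.2.2, h.2.1⟩

/-- `G` is a tree (as an abstract graph on its vertex set). -/
def IsTreeB (G : BGraph) : Prop :=
  (SimpleGraph.induce (verts G) (SimpleGraph.fromRel G.Adj)).IsTree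

/-- `G` is connected. -/
def ConnectedB (G : BGraph) : Prop :=
  (SimpleGraph.induce (verts G) (SimpleGraph.fromRel G.Adj)).Connected

/-- The set `S` induces a biclique in `G`: every vertex of `S` on side `A` is
adjacent to every vertex of `S` on side `B`. -/
def IsBicliqueOn (G : BGraph) (S : Set ℕ) : Prop :=
  ∀ u ∈ S ∩ G.A, ∀ v ∈ S ∩ G.B, G.Adj u v

/-- The set `S` induces a star in `G`: some centre `c ∈ S` is adjacent to all
other vertices of `S`, and every edge inside `S` uses the centre. -/
def IsStarOn (G : BGraph) (S : Set ℕ) : Prop :=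
  ∃ c ∈ S, (∀ v ∈ S, v ≠ c → G.Adj c v) ∧
    (∀ u ∈ S, ∀ v ∈ S, G.Adj u v → u = c ∨ v = c)

/-- An `A`-partitioning cover of `G`: a collection of subsets of `A ∪ B`
covering all vertices whose traces on `A` form a partition of `A` (every
vertex of `A` lies in a unique member of the collection). -/
def IsAPartCover (G : BGraph) (C : Set (Set ℕ)) : Prop :=
  (∀ X ∈ C, X ⊆ verts G) ∧
  (∀ v ∈ verts G, ∃ X ∈ C, v ∈ X) ∧
  (∀ a ∈ G.A, ∃! X, X ∈ C ∧ a ∈ X)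

/-- The cost of an `A`-partitioning cover: each `a ∈ A` lying in the unique
set `X ∈ C` costs `|(B ∩ X) \ N(a)| + |N(a) \ X|`; each `b ∈ B` lying in `j`
members of `C` costs `j - 1`. -/
noncomputable def coverCost (G : BGraph) (C : Set (Set ℕ)) : ℕ :=
  (∑ᶠ a ∈ G.A, ∑ᶠ X ∈ {X ∈ C | a ∈ X},
      (((G.B ∩ X) \ nbhd G a).ncard + ((nbhd G a) \ X).ncard)) +
  ∑ᶠ b ∈ G.B, ({X ∈ C | b ∈ X}.ncard - 1)

/-- The twin class of a vertex: all vertices of `G` with the same open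
neighbourhood. -/
def twinClass (G : BGraph) (v : ℕ) : Set ℕ :=
  {u ∈ verts G | nbhd G u = nbhd G v}

/-- The twin classes of `G`. -/
def twinClasses (G : BGraph) : Set (Set ℕ) :=
  {T | ∃ v ∈ verts G, T = twinClass G v}

/-- A cover is twin-adapted if every member contains each twin class either
entirely or not at all. -/
def TwinAdapted (G : BGraph) (C : Set (Set ℕ)) : Prop :=
  ∀ T ∈ twinClasses G, ∀ X ∈ C, T ∩ X = ∅ ∨ T ⊆ X

/-- `G` is a cycle with consecutive vertices `p 0, p 1, …, p (m-1)`
(indices modulo `m`), the vertices of even index forming side `A`. -/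
def IsCycleWith (G : BGraph) (p : ℕ → ℕ) (m : ℕ) : Prop :=
  (∀ i j, i < m → j < m → p i = p j → i = j) ∧
  G.A = p '' {i | i < m ∧ i % 2 = 0} ∧
  G.B = p '' {i | i < m ∧ i % 2 = 1} ∧
  (∀ x y, G.Adj x y ↔ ∃ i < m,
    (x = p i ∧ y = p ((i + 1) % m)) ∨ (y = p i ∧ x = p ((i + 1) % m)))

/-- `G` is a path with `l` edges and consecutive vertices `p 0, …, p l`,
the vertices of even index forming side `A`. -/
def IsPathWith (G : BGraph) (p : ℕ → ℕ) (l : ℕ) : Prop :=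
  (∀ i j, i ≤ l → j ≤ l → p i = p j → i = j) ∧
  G.A = p '' {i | i ≤ l ∧ i % 2 = 0} ∧
  G.B = p '' {i | i ≤ l ∧ i % 2 = 1} ∧
  (∀ x y, G.Adj x y ↔ ∃ i < l,
    (x = p i ∧ y = p (i + 1)) ∨ (y = p i ∧ x = p (i + 1)))

end BCE

/-!
Contract every member `X` of the cover to a single vertex standing for `X ∩ A`. The result is a
connected graph, so its number of vertices, `p + |B|` with `p` the number of members meeting `A`,
is at most one more than its number of edges. An edge at `b ∈ B` either leads to a member containing
`b` or comes from a neighbour of `b` in `A` whose member misses `b`; summing over `b` gives at most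
`|B| + cost` edges, hence `p ≤ cost + 1`. Two vertices of `A` of cost zero in the same member are
twins, so there are at most `p + cost ≤ 2 cost + 1 ≤ (cost + 1)²` twin classes in `A`.
-/

namespace BCE

lemma card_filter_ne_zero_le_sum {ι : Type*} (s : Finset ι) (c : ι → ℕ) :
    (s.filter (c · ≠ 0)).card ≤ ∑ i ∈ s, c i := by
  rw [← Finset.sum_filter_ne_zero, Finset.card_eq_sum_ones]
  exact Finset.sum_le_sum fun i hi => Nat.one_le_iff_ne_zero.2 (Finset.mem_filter.1 hi).2

lemma connected_map_of_surjective {V W : Type*} {H : SimpleGraph V} (hH : H.Connected)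
    {φ : V → W} (hφ : Function.Surjective φ) : (H.map φ).Connected := by
  have reachable_of_adj (u v : V) (huv : H.Adj u v) : (H.map φ).Reachable (φ u) (φ v) := by
    by_cases heq : φ u = φ v
    · rw [heq]
    · exact SimpleGraph.Adj.reachable ⟨heq, u, v, huv, rfl, rfl⟩
  have := hH.nonempty.map φ
  refine ⟨hφ.forall₂.2 fun u v => ?_⟩
  simp only [SimpleGraph.reachable_iff_reflTransGen] at reachable_of_adj ⊢
  exact ((SimpleGraph.reachable_iff_reflTransGen u v).1 (hH.preconnected u v)).lift' φ
    reachable_of_adj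

lemma ncard_range_le_ncard_add_one {V W : Type*} {H : SimpleGraph V} (hH : H.Connected)
    {φ : V → W} {E : Set (Sym2 W)} (hEfin : E.Finite)
    (hE : ∀ u v, H.Adj u v → φ u ≠ φ v → s(φ u, φ v) ∈ E) :
    (Set.range φ).ncard ≤ E.ncard + 1 := by
  refine (connected_map_of_surjective hH
    Set.rangeFactorization_surjective).card_vert_le_card_edgeSet_add_one.trans
    (Nat.add_le_add_right ?_ 1)
  rw [Nat.card_coe_set_eq]
  refine Set.ncard_le_ncard_of_injOn (Sym2.map Subtype.val) ?_
    (Sym2.map.injective Subtype.val_injective).injOn hEfin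
  rintro ⟨x, y⟩ ⟨hne, u, v, huv, rfl, rfl⟩
  exact hE u v huv (Subtype.coe_ne_coe.2 hne)

lemma nbhd_subset_B {G : BGraph} (hbip : Bipartite G) {a : ℕ} (ha : a ∈ G.A) :
    nbhd G a ⊆ G.B := by
  intro b hab
  rcases hbip.2 a b hab with ⟨-, hb⟩ | ⟨haB, -⟩
  · exact hb
  · exact absurd haB (Set.disjoint_left.1 hbip.1 ha)

section Contraction

variable {γ : Type*}

open Classical in
/-- The vertex map contracting the side `A` along the fibres of `f` and fixing the side `B`. -/
noncomputable def contract (G : BGraph) (f : ℕ → γ) (v : ℕ) : γ ⊕ ℕ :=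
  if v ∈ G.A then .inl (f v) else .inr v

/-- The edges, written from `A` to `B`, of the graph obtained from `G` by contracting the side `A`
along the fibres of `f`. -/
def contractedEdges (G : BGraph) (f : ℕ → γ) : Set (γ × ℕ) :=
  Prod.map f id '' {p ∈ G.A ×ˢ G.B | G.Adj p.1 p.2}

variable {G : BGraph} (f : ℕ → γ)

lemma contract_of_mem_A {a : ℕ} (ha : a ∈ G.A) : contract G f a = .inl (f a) := if_pos ha

lemma contract_of_mem_B (hdisj : Disjoint G.A G.B) {b : ℕ} (hb : b ∈ G.B) :
    contract G f b = .inr b :=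
  if_neg (Set.disjoint_right.1 hdisj hb)

lemma ncard_contract_image_verts (hdisj : Disjoint G.A G.B) :
    (contract G f '' verts G).ncard = (f '' G.A).ncard + G.B.ncard := by
  have himage : contract G f '' verts G = Sum.inl '' (f '' G.A) ∪ Sum.inr '' G.B := by
    rw [verts, Set.image_union, Set.image_image,
      Set.image_congr fun _ ha => contract_of_mem_A f ha,
      Set.image_congr fun _ hb => contract_of_mem_B f hdisj hb]
  rw [himage, Set.ncard_union_eq Set.disjoint_image_inl_image_inr
      ((G.finA.image f).image _) (G.finB.image _),
    Set.ncard_image_of_injective _ Sum.inl_injective,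
    Set.ncard_image_of_injective _ Sum.inr_injective]

lemma contractedEdges_finite : (contractedEdges G f).Finite :=
  ((G.finA.prod G.finB).subset (Set.sep_subset _ _)).image _

lemma contract_mem_image_contractedEdges (hbip : Bipartite G) {u v : ℕ} (huv : G.Adj u v) :
    s(contract G f u, contract G f v) ∈
      (fun e : γ × ℕ => s(Sum.inl e.1, Sum.inr e.2)) '' contractedEdges G f := by
  rcases hbip.2 u v huv with ⟨hu, hv⟩ | ⟨hu, hv⟩
  · rw [contract_of_mem_A f hu, contract_of_mem_B f hbip.1 hv]
    exact ⟨(f u, v), ⟨(u, v), ⟨⟨hu, hv⟩, huv⟩, rfl⟩, rfl⟩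
  · rw [contract_of_mem_B f hbip.1 hu, contract_of_mem_A f hv, Sym2.eq_swap]
    exact ⟨(f v, u), ⟨(v, u), ⟨⟨hv, hu⟩, G.symm u v huv⟩, rfl⟩, rfl⟩

lemma ncard_image_A_add_ncard_B_le (hbip : Bipartite G) (hconn : ConnectedB G) :
    (f '' G.A).ncard + G.B.ncard ≤ (contractedEdges G f).ncard + 1 := by
  rw [← ncard_contract_image_verts f hbip.1, Set.image_eq_range]
  refine (ncard_range_le_ncard_add_one hconn ((contractedEdges_finite f).image _)
    fun u v huv _ => contract_mem_image_contractedEdges f hbip ?_).trans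
    (Nat.add_le_add_right (Set.ncard_image_le (contractedEdges_finite f)) 1)
  exact huv.2.elim id (G.symm _ _)

end Contraction

/-- The union of the members of `C` containing `a`. When exactly one member contains `a`, as for
`a ∈ A` in an `A`-partitioning cover, this is that member. -/
def part (C : Set (Set ℕ)) (a : ℕ) : Set ℕ := ⋃₀ {X ∈ C | a ∈ X}

/-- The cost of a vertex `a ∈ A` lying in the member `X` of a cover. -/
noncomputable def vertexCost (G : BGraph) (X : Set ℕ) (a : ℕ) : ℕ :=
  ((G.B ∩ X) \ nbhd G a).ncard + (nbhd G a \ X).ncard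

section Cover

variable {G : BGraph} {C : Set (Set ℕ)}

lemma IsAPartCover.finite (hC : IsAPartCover G C) : C.Finite :=
  (G.finA.union G.finB).finite_subsets.subset hC.1

lemma IsAPartCover.sep_mem_eq_singleton (hC : IsAPartCover G C) {a : ℕ} (ha : a ∈ G.A) :
    {X ∈ C | a ∈ X} = {part C a} := by
  obtain ⟨X, hX, huniq⟩ := hC.2.2 a ha
  have hsep : {Y ∈ C | a ∈ Y} = {X} := Set.eq_singleton_iff_unique_mem.2 ⟨hX, huniq⟩
  rw [part, hsep, Set.sUnion_singleton]

lemma IsAPartCover.part_mem (hC : IsAPartCover G C) {a : ℕ} (ha : a ∈ G.A) : part C a ∈ C :=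
  ((hC.sep_mem_eq_singleton ha).ge rfl).1

lemma IsAPartCover.coverCost_eq (hC : IsAPartCover G C) :
    coverCost G C = ∑ a ∈ G.finA.toFinset, vertexCost G (part C a) a +
      ∑ b ∈ G.finB.toFinset, ({X ∈ C | b ∈ X}.ncard - 1) := by
  rw [coverCost, finsum_mem_eq_finite_toFinset_sum _ G.finA,
    finsum_mem_eq_finite_toFinset_sum _ G.finB]
  congr 1
  refine Finset.sum_congr rfl fun a ha => ?_
  rw [hC.sep_mem_eq_singleton (G.finA.mem_toFinset.1 ha), finsum_mem_singleton, vertexCost]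

lemma IsAPartCover.contractedEdges_part_subset (hC : IsAPartCover G C) :
    contractedEdges G (part C) ⊆
      (⋃ b ∈ G.finB.toFinset, (·, b) '' {X ∈ C | b ∈ X}) ∪
        ⋃ a ∈ G.finA.toFinset, (part C a, ·) '' (nbhd G a \ part C a) := by
  rintro _ ⟨⟨a, b⟩, ⟨⟨ha, hb⟩, hab⟩, rfl⟩
  by_cases hmem : b ∈ part C a
  · exact .inl (Set.mem_biUnion (G.finB.mem_toFinset.2 hb) ⟨part C a, ⟨hC.part_mem ha, hmem⟩, rfl⟩)
  · exact .inr (Set.mem_biUnion (G.finA.mem_toFinset.2 ha) ⟨b, ⟨hab, hmem⟩, rfl⟩)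

lemma IsAPartCover.ncard_contractedEdges_part_le (hC : IsAPartCover G C) (hbip : Bipartite G) :
    (contractedEdges G (part C)).ncard ≤ coverCost G C + G.B.ncard := by
  have hsepfin (b : ℕ) : {X ∈ C | b ∈ X}.Finite := hC.finite.subset (Set.sep_subset _ _)
  have hdelfin (a : ℕ) (ha : a ∈ G.finA.toFinset) : (nbhd G a \ part C a).Finite :=
    (G.finB.subset (nbhd_subset_B hbip (G.finA.mem_toFinset.1 ha))).sdiff
  have hkept : (⋃ b ∈ G.finB.toFinset, (·, b) '' {X ∈ C | b ∈ X}).ncard ≤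
      ∑ b ∈ G.finB.toFinset, ({X ∈ C | b ∈ X}.ncard - 1) + G.B.ncard := by
    rw [Set.ncard_eq_toFinset_card _ G.finB, Finset.card_eq_sum_ones, ← Finset.sum_add_distrib]
    refine (Finset.set_ncard_biUnion_le _ _).trans (Finset.sum_le_sum fun b _ => ?_)
    exact (Set.ncard_image_le (hsepfin b)).trans le_tsub_add
  have hdeleted : (⋃ a ∈ G.finA.toFinset, (part C a, ·) '' (nbhd G a \ part C a)).ncard ≤
      ∑ a ∈ G.finA.toFinset, vertexCost G (part C a) a := by
    refine (Finset.set_ncard_biUnion_le _ _).trans (Finset.sum_le_sum fun a ha => ?_)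
    exact (Set.ncard_image_le (hdelfin a ha)).trans (Nat.le_add_left _ _)
  have hunion := Set.ncard_le_ncard hC.contractedEdges_part_subset
    ((G.finB.toFinset.finite_toSet.biUnion fun b _ => (hsepfin b).image _).union
      (G.finA.toFinset.finite_toSet.biUnion fun a ha => (hdelfin a ha).image _))
  have := Set.ncard_union_le (⋃ b ∈ G.finB.toFinset, (·, b) '' {X ∈ C | b ∈ X})
    (⋃ a ∈ G.finA.toFinset, (part C a, ·) '' (nbhd G a \ part C a))
  rw [hC.coverCost_eq]
  lia

lemma IsAPartCover.ncard_image_part_le (hC : IsAPartCover G C) (hbip : Bipartite G)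
    (hconn : ConnectedB G) : (part C '' G.A).ncard ≤ coverCost G C + 1 := by
  have hconnected := ncard_image_A_add_ncard_B_le (part C) hbip hconn
  have hedges := hC.ncard_contractedEdges_part_le hbip
  lia

end Cover

section TwinClasses

lemma ncard_twinClasses_subset_A_le (G : BGraph) :
    {T ∈ twinClasses G | T ⊆ G.A}.ncard ≤ (nbhd G '' G.A).ncard := by
  have hsub : {T ∈ twinClasses G | T ⊆ G.A} ⊆
      (fun N => {u ∈ verts G | nbhd G u = N}) '' (nbhd G '' G.A) := by
    rintro _ ⟨⟨a, hav, rfl⟩, hT⟩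
    exact ⟨nbhd G a, ⟨a, hT ⟨hav, rfl⟩, rfl⟩, rfl⟩
  have hfin := G.finA.image (nbhd G)
  exact (Set.ncard_le_ncard hsub (hfin.image _)).trans (Set.ncard_image_le hfin)

variable {G : BGraph}

lemma nbhd_eq_of_vertexCost_eq_zero (hbip : Bipartite G) {X : Set ℕ} {a : ℕ} (ha : a ∈ G.A)
    (hcost : vertexCost G X a = 0) : nbhd G a = G.B ∩ X := by
  have hsub := nbhd_subset_B hbip ha
  obtain ⟨hadd, hdel⟩ := Nat.add_eq_zero_iff.1 hcost
  rw [Set.ncard_eq_zero (G.finB.inter_of_left X).sdiff, Set.sdiff_eq_empty] at hadd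
  rw [Set.ncard_eq_zero (G.finB.subset hsub).sdiff, Set.sdiff_eq_empty] at hdel
  exact (Set.subset_inter hsub hdel).antisymm hadd

lemma ncard_nbhd_image_A_le (hbip : Bipartite G) (f : ℕ → Set ℕ) :
    (nbhd G '' G.A).ncard ≤
      (f '' G.A).ncard + ∑ a ∈ G.finA.toFinset, vertexCost G (f a) a := by
  let P : Finset ℕ := G.finA.toFinset.filter fun a => vertexCost G (f a) a ≠ 0
  have hsub : nbhd G '' G.A ⊆ (G.B ∩ ·) '' (f '' G.A) ∪ nbhd G '' P := by
    rintro _ ⟨a, ha, rfl⟩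
    by_cases hcost : vertexCost G (f a) a = 0
    · exact .inl ⟨f a, ⟨a, ha, rfl⟩, (nbhd_eq_of_vertexCost_eq_zero hbip ha hcost).symm⟩
    · exact .inr ⟨a, Finset.mem_filter.2 ⟨G.finA.mem_toFinset.2 ha, hcost⟩, rfl⟩
  have hfin := G.finA.image f
  calc (nbhd G '' G.A).ncard
      ≤ ((G.B ∩ ·) '' (f '' G.A) ∪ nbhd G '' P).ncard :=
        Set.ncard_le_ncard hsub ((hfin.image _).union (P.finite_toSet.image _))
    _ ≤ ((G.B ∩ ·) '' (f '' G.A)).ncard + (nbhd G '' P).ncard := Set.ncard_union_le _ _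
    _ ≤ (f '' G.A).ncard + P.card :=
        Nat.add_le_add (Set.ncard_image_le hfin)
          ((Set.ncard_image_le P.finite_toSet).trans_eq (Set.ncard_coe_finset P))
    _ ≤ (f '' G.A).ncard + ∑ a ∈ G.finA.toFinset, vertexCost G (f a) a :=
        Nat.add_le_add_left (card_filter_ne_zero_le_sum _ _) _

lemma ncard_twinClasses_le_two_mul_coverCost_add_one (hbip : Bipartite G) (hconn : ConnectedB G)
    {C : Set (Set ℕ)} (hC : IsAPartCover G C) :
    {T ∈ twinClasses G | T ⊆ G.A}.ncard ≤ 2 * coverCost G C + 1 := by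
  have hclasses := ncard_twinClasses_subset_A_le G
  have hnbhds := ncard_nbhd_image_A_le hbip (part C)
  have hparts := hC.ncard_image_part_le hbip hconn
  have hcost := hC.coverCost_eq
  lia

end TwinClasses

/-- Let `G = (A, B, E)` be a connected bipartite graph having
exactly `k` twin classes contained in `A`.  Then every `A`-partitioning cover
of `G` has cost at least `√k - 1`. -/
theorem cover_cost_sqrt_lower_bound (G : BGraph) (hbip : Bipartite G)
    (hconn : ConnectedB G) (k : ℕ)
    (hk : {T ∈ twinClasses G | T ⊆ G.A}.ncard = k) :
    ∀ C, IsAPartCover G C → Real.sqrt k - 1 ≤ (coverCost G C : ℝ) := by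
  intro C hC
  have hle : k ≤ (coverCost G C + 1) ^ 2 :=
    calc k ≤ 2 * coverCost G C + 1 :=
          hk ▸ ncard_twinClasses_le_two_mul_coverCost_add_one hbip hconn hC
      _ ≤ (coverCost G C + 1) ^ 2 := by nlinarith
  rw [sub_le_iff_le_add, Real.sqrt_le_left (by positivity)]
  exact_mod_cast hle

end BCE
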